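/- arXiv:2505.12951 — 2 statements merged into one kernel-verified Lean document; each statement's English description precedes it below -/
import Mathlib

section
/- Let Y be a finite nonempty type, p : Y → ℝ a probability mass function, r : Y → ℝ, and β > 0. Let m be the maximum of r over the support of p and p* = ∑_{y : r y = m} p y. Then m + β · log p* ≤ β · log (∑_y p y · exp (r y / β)) ≤ m. -/
/-!
Pulling the factor `exp (m / β)` out of the partition function `∑ p y * exp (r y / β)` leaves the
expectation of `exp (-(m - r y) / β)`. Its terms are at most `p y`, and equal to `p y` where
`r y = m`, so it lies between `p*` and `1`; applying the increasing map `β * log` gives both bounds.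
-/

open Finset

section WeightedSums

variable {ι R : Type*} [Semiring R] [PartialOrder R] {s t : Finset ι} {w g : ι → R} {a b : R}

theorem sum_mul_le_sum_mul_of_subset [IsOrderedRing R] (hts : t ⊆ s) (hw : ∀ i ∈ s, 0 ≤ w i)
    (hg : ∀ i ∈ s, 0 ≤ g i) (hag : ∀ i ∈ t, a ≤ g i) :
    (∑ i ∈ t, w i) * a ≤ ∑ i ∈ s, w i * g i :=
  calc (∑ i ∈ t, w i) * a = ∑ i ∈ t, w i * a := sum_mul ..
    _ ≤ ∑ i ∈ t, w i * g i :=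
      sum_le_sum fun i hi => mul_le_mul_of_nonneg_left (hag i hi) (hw i (hts hi))
    _ ≤ ∑ i ∈ s, w i * g i :=
      sum_le_sum_of_subset_of_nonneg hts fun i hi _ => mul_nonneg (hw i hi) (hg i hi)

theorem sum_mul_le_sum_mul_of_le_on_support [IsOrderedRing R] (hw : ∀ i ∈ s, 0 ≤ w i)
    (hgb : ∀ i ∈ s, 0 < w i → g i ≤ b) :
    ∑ i ∈ s, w i * g i ≤ (∑ i ∈ s, w i) * b := by
  rw [sum_mul]
  refine sum_le_sum fun i hi => ?_
  obtain hzero | hpos := (hw i hi).eq_or_lt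
  · rw [← hzero, zero_mul, zero_mul]
  · exact mul_le_mul_of_nonneg_left (hgb i hi hpos) hpos.le

theorem sum_mul_pos_of_sum_pos [IsStrictOrderedRing R] (hw : ∀ i ∈ s, 0 ≤ w i)
    (hsum : 0 < ∑ i ∈ s, w i) (hg : ∀ i ∈ s, 0 < g i) : 0 < ∑ i ∈ s, w i * g i := by
  obtain ⟨i, hi, hwi⟩ := (sum_pos_iff_of_nonneg hw).mp hsum
  exact sum_pos' (fun j hj => mul_nonneg (hw j hj) (hg j hj).le) ⟨i, hi, mul_pos hwi (hg i hi)⟩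

end WeightedSums

section SoftValue

variable {ι : Type*} {s t : Finset ι} {w f : ι → ℝ} {β c : ℝ}

/-- The soft value of the reward `f` at temperature `β` under the weights `w` on `s`: a smoothed
maximum of `f` over the support of `w`. The weights need not sum to `1`. -/
noncomputable def softValue (s : Finset ι) (w f : ι → ℝ) (β : ℝ) : ℝ :=
  β * Real.log (∑ i ∈ s, w i * Real.exp (f i / β))

theorem add_mul_log_eq_mul_log_mul_exp {a : ℝ} (hβ : β ≠ 0) (ha : a ≠ 0) :
    c + β * Real.log a = β * Real.log (a * Real.exp (c / β)) := by
  rw [Real.log_mul ha (Real.exp_ne_zero _), Real.log_exp]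
  field_simp
  ring

theorem add_mul_log_sum_le_softValue (hβ : 0 < β) (hts : t ⊆ s) (hw : ∀ i ∈ s, 0 ≤ w i)
    (hpos : 0 < ∑ i ∈ t, w i) (hf : ∀ i ∈ t, c ≤ f i) :
    c + β * Real.log (∑ i ∈ t, w i) ≤ softValue s w f β := by
  have hexp : (∑ i ∈ t, w i) * Real.exp (c / β) ≤ ∑ i ∈ s, w i * Real.exp (f i / β) :=
    sum_mul_le_sum_mul_of_subset hts hw (fun _ _ => (Real.exp_pos _).le) fun i hi =>
      Real.exp_le_exp.mpr (div_le_div_of_nonneg_right (hf i hi) hβ.le)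
  rw [add_mul_log_eq_mul_log_mul_exp hβ.ne' hpos.ne']
  exact mul_le_mul_of_nonneg_left
    (Real.log_le_log (mul_pos hpos (Real.exp_pos _)) hexp) hβ.le

theorem softValue_le_add_mul_log_sum (hβ : 0 < β) (hw : ∀ i ∈ s, 0 ≤ w i)
    (hpos : 0 < ∑ i ∈ s, w i) (hf : ∀ i ∈ s, 0 < w i → f i ≤ c) :
    softValue s w f β ≤ c + β * Real.log (∑ i ∈ s, w i) := by
  have hexp : ∑ i ∈ s, w i * Real.exp (f i / β) ≤ (∑ i ∈ s, w i) * Real.exp (c / β) :=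
    sum_mul_le_sum_mul_of_le_on_support hw fun i hi hwi =>
      Real.exp_le_exp.mpr (div_le_div_of_nonneg_right (hf i hi hwi) hβ.le)
  have hexp_pos : 0 < ∑ i ∈ s, w i * Real.exp (f i / β) :=
    sum_mul_pos_of_sum_pos hw hpos fun _ _ => Real.exp_pos _
  rw [add_mul_log_eq_mul_log_mul_exp hβ.ne' hpos.ne']
  exact mul_le_mul_of_nonneg_left (Real.log_le_log hexp_pos hexp) hβ.le

end SoftValue

theorem stmt_6 {Y : Type*} [Fintype Y] [Nonempty Y]
    (p : Y → ℝ) (hp : ∀ y, 0 ≤ p y) (hps : ∑ y, p y = 1)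
    (r : Y → ℝ) (β : ℝ) (hβ : 0 < β) (m : ℝ)
    (hm_ub : ∀ y, 0 < p y → r y ≤ m)
    (hm_mem : ∃ y, 0 < p y ∧ r y = m) :
    m + β * Real.log (∑ y ∈ Finset.univ.filter (fun y => r y = m), p y) ≤
        β * Real.log (∑ y, p y * Real.exp (r y / β)) ∧
    β * Real.log (∑ y, p y * Real.exp (r y / β)) ≤ m := by
  have hpstar : 0 < ∑ y with r y = m, p y := by
    obtain ⟨y, hpy, hry⟩ := hm_mem
    exact sum_pos' (fun z _ => hp z) ⟨y, mem_filter.mpr ⟨mem_univ y, hry⟩, hpy⟩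
  have hlower : m + β * Real.log (∑ y with r y = m, p y) ≤ softValue univ p r β :=
    add_mul_log_sum_le_softValue hβ (filter_subset _ _) (fun y _ => hp y) hpstar
      fun y hy => (mem_filter.mp hy).2.ge
  have hupper : softValue univ p r β ≤ m + β * Real.log (∑ y, p y) :=
    softValue_le_add_mul_log_sum hβ (fun y _ => hp y) (hps ▸ one_pos) fun y _ => hm_ub y
  rw [hps, Real.log_one, mul_zero, add_zero] at hupper
  exact ⟨hlower, hupper⟩
end

section
/- Let Y be a finite nonempty type, p : Y → ℝ a probability mass function, r : Y → ℝ with |r y| ≤ r_max for all y (r_max ≥ 0), N a natural number, γ ≥ 0 and β₁ ≥ 0 real numbers, E a real normed vector space, and g : Y → E with ‖g y‖ ≤ 2 · N · γ for all y. Then ‖∑_y p y • ((β₁ · (r y − r̄)) • g y)‖ ≤ (4 · r_max + 2) · N · β₁ · γ · Var^{1/3}, where r̄ = ∑_y p y · r y, Var = ∑_y p y · (r y − r̄)², and Var^{1/3} denotes the real cube root (real power 1/3) of the nonnegative number Var. -/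
/-!
Since `|x| = |x| ^ (1 - 2 * θ) * (x ^ 2) ^ θ`, a deviation bounded by `B` satisfies
`|x| ≤ B ^ (1 - 2 * θ) * (x ^ 2) ^ θ`. Averaging and applying Jensen's inequality to the concave
function `t ↦ t ^ θ` bounds the mean absolute deviation by `B ^ (1 - 2 * θ) * Var ^ θ`. The cube
root is `θ = 1 / 3`, and `B ^ (1 - 2 * θ) ≤ B + 1` makes the constant affine in the reward bound.
-/

section RealPowers

variable {x B θ : ℝ}

lemma abs_le_rpow_mul_sq_rpow (hx : |x| ≤ B) (hθ₀ : 0 ≤ θ) (hθ : θ ≤ 1 / 2) :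
    |x| ≤ B ^ (1 - 2 * θ) * (x ^ 2) ^ θ := by
  have hexp : 0 ≤ 1 - 2 * θ := by linarith
  calc
    |x| = |x| ^ (1 - 2 * θ) * |x| ^ (2 * θ) := by
      rw [← Real.rpow_add_of_nonneg (abs_nonneg x) hexp (by positivity), sub_add_cancel,
        Real.rpow_one]
    _ = |x| ^ (1 - 2 * θ) * (x ^ 2) ^ θ := by
      rw [Real.rpow_mul (abs_nonneg x), Real.rpow_two, sq_abs]
    _ ≤ B ^ (1 - 2 * θ) * (x ^ 2) ^ θ := by gcongr

lemma rpow_le_add_one (hx : 0 ≤ x) (hθ₀ : 0 ≤ θ) (hθ : θ ≤ 1) : x ^ θ ≤ x + 1 := calc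
  x ^ θ ≤ (x + 1) ^ θ := by gcongr; linarith
  _ ≤ x + 1 := Real.rpow_le_self_of_one_le (by linarith) hθ

end RealPowers

section WeightedMeans

variable {ι E : Type*} [SeminormedAddCommGroup E] [NormedSpace ℝ E]
  {s : Finset ι} {w : ι → ℝ}

lemma norm_sum_smul_smul_le {c : ι → ℝ} {g : ι → E} {G : ℝ} (hw : ∀ i ∈ s, 0 ≤ w i)
    (hg : ∀ i ∈ s, ‖g i‖ ≤ G) :
    ‖∑ i ∈ s, w i • (c i • g i)‖ ≤ G * ∑ i ∈ s, w i * |c i| := by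
  rw [Finset.mul_sum]
  refine norm_sum_le_of_le s fun i hi => ?_
  calc
    ‖w i • (c i • g i)‖ = ‖g i‖ * (w i * |c i|) := by
      rw [norm_smul, norm_smul, Real.norm_of_nonneg (hw i hi), Real.norm_eq_abs]
      ring
    _ ≤ G * (w i * |c i|) :=
      mul_le_mul_of_nonneg_right (hg i hi) (mul_nonneg (hw i hi) (abs_nonneg _))

lemma norm_sub_sum_smul_le {f : ι → E} {R : ℝ} (hw : ∀ i ∈ s, 0 ≤ w i)
    (hw₁ : ∑ i ∈ s, w i = 1) (hf : ∀ i ∈ s, ‖f i‖ ≤ R) {i : ι} (hi : i ∈ s) :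
    ‖f i - ∑ j ∈ s, w j • f j‖ ≤ 2 * R := by
  have hmean : ‖∑ j ∈ s, w j • f j‖ ≤ R := mem_closedBall_zero_iff.1 <|
    (convex_closedBall (0 : E) R).sum_mem hw hw₁ fun j hj => mem_closedBall_zero_iff.2 (hf j hj)
  linarith [norm_sub_le (f i) (∑ j ∈ s, w j • f j), hf i hi]

lemma sum_mul_abs_le_rpow_mul_sum_mul_sq_rpow {d : ι → ℝ} {B θ : ℝ} (hw : ∀ i ∈ s, 0 ≤ w i)
    (hw₁ : ∑ i ∈ s, w i = 1) (hB : 0 ≤ B) (hd : ∀ i ∈ s, |d i| ≤ B)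
    (hθ₀ : 0 ≤ θ) (hθ : θ ≤ 1 / 2) :
    ∑ i ∈ s, w i * |d i| ≤ B ^ (1 - 2 * θ) * (∑ i ∈ s, w i * d i ^ 2) ^ θ := by
  have jensen : ∑ i ∈ s, w i * (d i ^ 2) ^ θ ≤ (∑ i ∈ s, w i * d i ^ 2) ^ θ :=
    (Real.concaveOn_rpow hθ₀ (by linarith)).le_map_sum hw hw₁ fun i _ => sq_nonneg (d i)
  calc
    ∑ i ∈ s, w i * |d i| ≤ ∑ i ∈ s, w i * (B ^ (1 - 2 * θ) * (d i ^ 2) ^ θ) :=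
      Finset.sum_le_sum fun i hi =>
        mul_le_mul_of_nonneg_left (abs_le_rpow_mul_sq_rpow (hd i hi) hθ₀ hθ) (hw i hi)
    _ = B ^ (1 - 2 * θ) * ∑ i ∈ s, w i * (d i ^ 2) ^ θ := by
      simp only [Finset.mul_sum, mul_left_comm]
    _ ≤ B ^ (1 - 2 * θ) * (∑ i ∈ s, w i * d i ^ 2) ^ θ := by gcongr

theorem stmt_13_general {r : ι → ℝ} {g : ι → E} {R G θ : ℝ} (β : ℝ) (hw : ∀ i ∈ s, 0 ≤ w i)
    (hw₁ : ∑ i ∈ s, w i = 1) (hr : ∀ i ∈ s, |r i| ≤ R) (hg : ∀ i ∈ s, ‖g i‖ ≤ G)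
    (hθ₀ : 0 ≤ θ) (hθ : θ ≤ 1 / 2) :
    ‖∑ i ∈ s, w i • ((β * (r i - ∑ j ∈ s, w j * r j)) • g i)‖ ≤
      |β| * G * ((2 * R + 1) * (∑ i ∈ s, w i * (r i - ∑ j ∈ s, w j * r j) ^ 2) ^ θ) := by
  obtain ⟨k, hk⟩ : s.Nonempty := Finset.nonempty_of_sum_ne_zero (hw₁.trans_ne one_ne_zero)
  have hR : 0 ≤ R := (abs_nonneg _).trans (hr k hk)
  have hG : 0 ≤ G := (norm_nonneg _).trans (hg k hk)
  set d : ι → ℝ := fun i => r i - ∑ j ∈ s, w j * r j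
  have hd : ∀ i ∈ s, |d i| ≤ 2 * R := fun i hi => norm_sub_sum_smul_le (f := r) hw hw₁ hr hi
  have hV : 0 ≤ ∑ i ∈ s, w i * d i ^ 2 :=
    Finset.sum_nonneg fun i hi => mul_nonneg (hw i hi) (sq_nonneg _)
  calc
    ‖∑ i ∈ s, w i • ((β * d i) • g i)‖ ≤ G * ∑ i ∈ s, w i * |β * d i| :=
      norm_sum_smul_smul_le hw hg
    _ = |β| * G * ∑ i ∈ s, w i * |d i| := by
      simp only [abs_mul, mul_left_comm _ |β|, ← Finset.mul_sum, mul_assoc]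
    _ ≤ |β| * G * ((2 * R) ^ (1 - 2 * θ) * (∑ i ∈ s, w i * d i ^ 2) ^ θ) := by
      gcongr
      exact sum_mul_abs_le_rpow_mul_sum_mul_sq_rpow hw hw₁ (by positivity) hd hθ₀ hθ
    _ ≤ |β| * G * ((2 * R + 1) * (∑ i ∈ s, w i * d i ^ 2) ^ θ) := by
      gcongr
      exact rpow_le_add_one (by positivity) (by linarith) (by linarith)

end WeightedMeans

theorem stmt_13 {Y : Type*} [Fintype Y] [Nonempty Y]
    (p : Y → ℝ) (hp : ∀ y, 0 ≤ p y) (hps : ∑ y, p y = 1)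
    (r : Y → ℝ) (r_max : ℝ) (hr_max : 0 ≤ r_max) (hr : ∀ y, |r y| ≤ r_max)
    (N : ℕ) (γ β₁ : ℝ) (hγ : 0 ≤ γ) (hβ₁ : 0 ≤ β₁)
    {E : Type*} [NormedAddCommGroup E] [NormedSpace ℝ E]
    (g : Y → E) (hg : ∀ y, ‖g y‖ ≤ 2 * N * γ) :
    ‖∑ y, p y • ((β₁ * (r y - ∑ z, p z * r z)) • g y)‖ ≤
      (4 * r_max + 2) * N * β₁ * γ *
        (∑ y, p y * (r y - ∑ z, p z * r z) ^ 2) ^ ((1 : ℝ) / 3) := by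
  refine (stmt_13_general β₁ (fun y _ => hp y) hps (fun y _ => hr y) (fun y _ => hg y)
    (θ := 1 / 3) (by norm_num) (by norm_num)).trans_eq ?_
  rw [abs_of_nonneg hβ₁]
  ring
end
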